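/- Let ψ : C^∞([0,1]; S^1) → ℝ^n be a map that is continuous with respect to the L^1-norm on C^∞([0,1]; S^1) and satisfies ψ(−h) = −ψ(h) for all h ∈ C^∞([0,1]; S^1). Then there exists h ∈ C^∞([0,1]; S^1) with ψ(h) = 0 and ‖h‖_{W^{1,1}} ≤ 1 + πn. -/

import Mathlib

open MeasureTheory

/-- A function `h : ℝ → ℂ` represents an element of `C^∞([0,1]; S¹)`:
it is smooth on `[0,1]` and takes values in the unit circle there. -/
def SmoothCircleValued (h : ℝ → ℂ) : Prop :=
  ContDiffOn ℝ (⊤ : ℕ∞) h (Set.Icc 0 1) ∧ ∀ x ∈ Set.Icc (0:ℝ) 1, ‖h x‖ = 1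

/-!
A smooth curve in the circle whose phase increases by `2 * π * k` over `[0, 1]` has length
`2 * π * k`, so it suffices to find a zero of `ψ` among the boundary values of finite Blaschke
products of degree at most `n / 2`. The Schur algorithm parametrizes these by the nonzero vectors
`v` of `ℂ ^ (n / 2 + 1)`, oddly and continuously in `L¹`: where a Schur parameter becomes unimodular
the curve jumps pointwise on a null set only. The real dimension `2 * (n / 2 + 1)` exceeds `n`, and
the Borsuk–Ulam theorem gives the zero.

For Borsuk–Ulam, the signs of the coordinates of an odd map from the sphere to `ℝⁿ` are 0-cochains
mod 2. The cup product of their coboundaries has the value 1 on a hemisphere, as one sees by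
descending from each hemisphere to half of its boundary. Hence in every fine antipodal triangulation
of the sphere some simplex has a sign change in each coordinate.
-/

section Chains

/-- Mod 2 chains on ordered simplices with vertices in `V`. A simplex is the list of its vertices,
so a list of length `k` has dimension `k - 1`, and the empty list is the simplex of dimension `-1`
of the augmented complex. -/
abbrev OrderedChain (V : Type*) : Type _ := List V →₀ ZMod 2

/-- The chains all of whose simplices lie in `S`. -/
abbrev chainsOn {V : Type*} (S : Set (List V)) : Submodule (ZMod 2) (OrderedChain V) :=
  Finsupp.supported (ZMod 2) (ZMod 2) S

variable {V M : Type*} [AddCommGroup M] [Module (ZMod 2) M]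

theorem simplex_mem_chainsOn {S : Set (List V)} {l : List V} (hl : l ∈ S) :
    Finsupp.single l 1 ∈ chainsOn S :=
  Finsupp.single_mem_supported _ _ hl

theorem map_mem_of_mem_chainsOn {S : Set (List V)} {P : Submodule (ZMod 2) M}
    {f : OrderedChain V →ₗ[ZMod 2] M} (hf : ∀ l ∈ S, f (.single l 1) ∈ P) {c : OrderedChain V}
    (hc : c ∈ chainsOn S) : f c ∈ P := by
  rw [chainsOn, Finsupp.supported_eq_span_single] at hc
  refine (Submodule.span_le (p := P.comap f)).2 ?_ hc
  rintro _ ⟨l, hl, rfl⟩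
  exact hf l hl

theorem map_eq_of_mem_chainsOn {S : Set (List V)} {f g : OrderedChain V →ₗ[ZMod 2] M}
    (hfg : ∀ l ∈ S, f (.single l 1) = g (.single l 1)) {c : OrderedChain V}
    (hc : c ∈ chainsOn S) : f c = g c :=
  sub_eq_zero.1 <| map_mem_of_mem_chainsOn (P := ⊥) (f := f - g)
    (fun l hl => by simp [hfg l hl]) hc

theorem map_eq_of_forall_simplex {f g : OrderedChain V →ₗ[ZMod 2] M}
    (hfg : ∀ l, f (.single l 1) = g (.single l 1)) (c : OrderedChain V) : f c = g c :=
  map_eq_of_mem_chainsOn (S := Set.univ) (fun l _ => hfg l) (by simp)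

/-- The join of a chain with the vertex `v`. -/
noncomputable def cone (v : V) : OrderedChain V →ₗ[ZMod 2] OrderedChain V :=
  Finsupp.lmapDomain (ZMod 2) (ZMod 2) (List.cons v)

@[simp]
theorem cone_simplex (v : V) (l : List V) : cone v (.single l 1) = .single (v :: l) 1 := by
  simp [cone]

/-- The boundary of a simplex; mod 2, deleting one vertex at a time needs no signs. -/
noncomputable def simplexBoundary : List V → OrderedChain V
  | [] => 0
  | v :: l => .single l 1 + cone v (simplexBoundary l)

/-- The boundary operator of the augmented complex of ordered chains. -/
noncomputable def boundary : OrderedChain V →ₗ[ZMod 2] OrderedChain V :=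
  Finsupp.linearCombination (ZMod 2) simplexBoundary

@[simp]
theorem boundary_nil : boundary (.single ([] : List V) 1) = 0 := by
  simp [boundary, simplexBoundary]

theorem boundary_cons (v : V) (l : List V) :
    boundary (.single (v :: l) 1) = .single l 1 + cone v (boundary (.single l 1)) := by
  simp [boundary, simplexBoundary]

theorem boundary_cone (v : V) (c : OrderedChain V) :
    boundary (cone v c) = c + cone v (boundary c) :=
  map_eq_of_forall_simplex (f := boundary ∘ₗ cone v) (g := .id + cone v ∘ₗ boundary)
    (fun l => by simp [boundary_cons]) c

theorem chain_add_self (c : OrderedChain V) : c + c = 0 := by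
  rw [← two_nsmul, ← Nat.cast_smul_eq_nsmul (ZMod 2)]
  simp [show (2 : ZMod 2) = 0 from rfl]

theorem boundary_boundary (c : OrderedChain V) : boundary (boundary c) = 0 := by
  refine map_eq_of_forall_simplex (f := boundary ∘ₗ boundary) (g := 0) (fun l => ?_) c
  simp only [LinearMap.comp_apply, LinearMap.zero_apply]
  induction l with
  | nil => simp
  | cons v l ih =>
    rw [boundary_cons, map_add, boundary_cone, ih, map_zero, add_zero, chain_add_self]

theorem boundary_simplex_mem (l : List V) :
    boundary (.single l 1) ∈ chainsOn {l' : List V | l'.length + 1 = l.length ∧ l' ⊆ l} := by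
  induction l with
  | nil => simp
  | cons v l ih =>
    rw [boundary_cons]
    refine add_mem (simplex_mem_chainsOn ⟨rfl, List.subset_cons_self v l⟩)
      (map_mem_of_mem_chainsOn (fun l' hl' => ?_) ih)
    rw [cone_simplex]
    exact simplex_mem_chainsOn ⟨congrArg Nat.succ hl'.1, List.cons_subset_cons v hl'.2⟩

/-- The chain map induced by `x ↦ -x` on vertices. -/
noncomputable def antipode [Neg V] : OrderedChain V →ₗ[ZMod 2] OrderedChain V :=
  Finsupp.lmapDomain (ZMod 2) (ZMod 2) (List.map Neg.neg)

@[simp]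
theorem antipode_simplex [Neg V] (l : List V) :
    antipode (.single l 1) = .single (l.map Neg.neg) 1 := by
  simp [antipode]

theorem antipode_cone [Neg V] (v : V) (c : OrderedChain V) :
    antipode (cone v c) = cone (-v) (antipode c) :=
  map_eq_of_forall_simplex (f := antipode ∘ₗ cone v) (g := cone (-v) ∘ₗ antipode)
    (fun l => by simp) c

theorem antipode_antipode [InvolutiveNeg V] (c : OrderedChain V) : antipode (antipode c) = c :=
  map_eq_of_forall_simplex (f := antipode ∘ₗ antipode) (g := LinearMap.id)
    (fun l => by simp) c

theorem antipode_boundary [Neg V] (c : OrderedChain V) :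
    antipode (boundary c) = boundary (antipode c) := by
  refine map_eq_of_forall_simplex (V := V) (f := antipode ∘ₗ boundary)
    (g := boundary ∘ₗ antipode) (fun l => ?_) c
  simp only [LinearMap.comp_apply]
  induction l with
  | nil => simp
  | cons v l ih => simp [boundary_cons, antipode_cone, ih]

end Chains

section Cochains

variable {V : Type*}

/-- The cup product of the 0-cochain `s` with the cochain `w`. -/
noncomputable def vertexCup (s : V → ZMod 2) (w : OrderedChain V →ₗ[ZMod 2] ZMod 2) :
    OrderedChain V →ₗ[ZMod 2] ZMod 2 :=
  Finsupp.linearCombination (ZMod 2) fun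
    | [] => 0
    | v :: l => s v * w (.single (v :: l) 1)

@[simp]
theorem vertexCup_nil (s : V → ZMod 2) (w : OrderedChain V →ₗ[ZMod 2] ZMod 2) :
    vertexCup s w (.single [] 1) = 0 := by
  simp [vertexCup]

@[simp]
theorem vertexCup_cons (s : V → ZMod 2) (w : OrderedChain V →ₗ[ZMod 2] ZMod 2) (v : V)
    (l : List V) : vertexCup s w (.single (v :: l) 1) = s v * w (.single (v :: l) 1) := by
  simp [vertexCup]

theorem vertexCup_cone (s : V → ZMod 2) (w : OrderedChain V →ₗ[ZMod 2] ZMod 2) (v : V)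
    (c : OrderedChain V) : vertexCup s w (cone v c) = s v * w (cone v c) :=
  map_eq_of_forall_simplex (f := vertexCup s w ∘ₗ cone v) (g := s v • w ∘ₗ cone v)
    (fun l => by simp) c

/-- The `k`-cocycle `δ(s (k-1)) ∪ ⋯ ∪ δ(s 0)`, where `δ` is the coboundary of a 0-cochain. It is
built up from the augmentation cocycle through `δs ∪ w = δ(s ∪ w)`, valid for cocycles `w`. -/
noncomputable def cupCoboundary (s : ℕ → V → ZMod 2) : ℕ → OrderedChain V →ₗ[ZMod 2] ZMod 2
  | 0 => Finsupp.lapply [] ∘ₗ boundary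
  | k + 1 => vertexCup (s k) (cupCoboundary s k) ∘ₗ boundary

theorem cupCoboundary_zero_apply (s : ℕ → V → ZMod 2) (c : OrderedChain V) :
    cupCoboundary s 0 c = boundary c [] := rfl

theorem cupCoboundary_succ_apply (s : ℕ → V → ZMod 2) (k : ℕ) (c : OrderedChain V) :
    cupCoboundary s (k + 1) c = vertexCup (s k) (cupCoboundary s k) (boundary c) := rfl

theorem cupCoboundary_boundary (s : ℕ → V → ZMod 2) (k : ℕ) (c : OrderedChain V) :
    cupCoboundary s k (boundary c) = 0 := by
  cases k <;> simp [cupCoboundary, boundary_boundary]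

@[simp]
theorem cupCoboundary_nil (s : ℕ → V → ZMod 2) (k : ℕ) :
    cupCoboundary s k (.single [] 1) = 0 := by
  cases k <;> simp [cupCoboundary]

@[simp]
theorem cupCoboundary_succ_singleton (s : ℕ → V → ZMod 2) (k : ℕ) (v : V) :
    cupCoboundary s (k + 1) (.single [v] 1) = 0 := by
  simp [cupCoboundary, boundary_cons]

theorem cupCoboundary_succ_cons_cons (s : ℕ → V → ZMod 2) (k : ℕ) (v u : V) (l : List V) :
    cupCoboundary s (k + 1) (.single (v :: u :: l) 1) =
      (s k v + s k u) * cupCoboundary s k (.single (u :: l) 1) := by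
  have cocycle := cupCoboundary_boundary s k (.single (v :: u :: l) 1)
  rw [boundary_cons, map_add, CharTwo.add_eq_zero] at cocycle
  rw [cupCoboundary_succ_apply, boundary_cons, map_add, vertexCup_cons, vertexCup_cone, ← cocycle]
  ring

theorem exists_ne_of_cupCoboundary_ne_zero {s : ℕ → V → ZMod 2} {k : ℕ} {l : List V}
    (hl : cupCoboundary s k (.single l 1) ≠ 0) : ∀ j < k, ∃ u ∈ l, ∃ w ∈ l, s j u ≠ s j w := by
  induction k generalizing l with
  | zero => simp
  | succ k ih =>
    match l with
    | [] => exact absurd (cupCoboundary_nil s _) hl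
    | [v] => exact absurd (cupCoboundary_succ_singleton s k v) hl
    | v :: u :: l =>
      rw [cupCoboundary_succ_cons_cons] at hl
      intro j hj
      rcases Nat.lt_succ_iff_lt_or_eq.1 hj with hj | rfl
      · obtain ⟨a, ha, b, hb, hab⟩ := ih (right_ne_zero_of_mul hl) j hj
        exact ⟨a, List.mem_cons_of_mem _ ha, b, List.mem_cons_of_mem _ hb, hab⟩
      · refine ⟨v, by simp, u, by simp, fun h => left_ne_zero_of_mul hl ?_⟩
        rw [h, CharTwo.add_self_eq_zero]

variable [Neg V] {K : Set V} {s : ℕ → V → ZMod 2}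

theorem cupCoboundary_map_neg (hs : ∀ k, ∀ v ∈ K, s k (-v) = s k v + 1) (k : ℕ) (l : List V)
    (hl : ∀ x ∈ l, x ∈ K) :
    cupCoboundary s k (.single (l.map Neg.neg) 1) = cupCoboundary s k (.single l 1) := by
  induction k generalizing l with
  | zero =>
    have antipode_apply_nil (c : OrderedChain V) : antipode c [] = c [] :=
      map_eq_of_forall_simplex (f := Finsupp.lapply [] ∘ₗ antipode) (g := Finsupp.lapply [])
        (fun l => by simp [Finsupp.single_apply]) c
    rw [cupCoboundary_zero_apply, cupCoboundary_zero_apply, ← antipode_simplex,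
      ← antipode_boundary, antipode_apply_nil]
  | succ k ih =>
    match l with
    | [] => simp
    | [v] => simp
    | v :: u :: l =>
      have ih_tail := ih (u :: l) fun x hx => hl x (List.mem_cons_of_mem _ hx)
      simp only [List.map_cons] at ih_tail ⊢
      rw [cupCoboundary_succ_cons_cons, cupCoboundary_succ_cons_cons, ih_tail,
        hs k v (hl v (by simp)), hs k u (hl u (by simp)), add_add_add_comm,
        CharTwo.add_self_eq_zero, add_zero]

theorem vertexCup_add_antipode (hs : ∀ k, ∀ v ∈ K, s k (-v) = s k v + 1) (k : ℕ)
    {c : OrderedChain V} (hc : c ∈ chainsOn {l | ∀ x ∈ l, x ∈ K}) :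
    vertexCup (s k) (cupCoboundary s k) (c + antipode c) = cupCoboundary s k c := by
  refine map_eq_of_mem_chainsOn (f := vertexCup (s k) (cupCoboundary s k) ∘ₗ (.id + antipode))
    (fun l hl => ?_) hc
  match l with
  | [] => simp
  | v :: l =>
    have h_neg := cupCoboundary_map_neg hs k (v :: l) hl
    rw [List.map_cons] at h_neg
    simp only [LinearMap.comp_apply, LinearMap.add_apply, LinearMap.id_apply, map_add,
      antipode_simplex, List.map_cons, vertexCup_cons, h_neg, hs k v (hl v (by simp))]
    rw [← add_mul, ← add_assoc, CharTwo.add_self_eq_zero, zero_add, one_mul]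

/-- A sequence of chains modelled on the hemispheres of `S⁰ ⊆ S¹ ⊆ ⋯`: the boundary of each
hemisphere is the preceding hemisphere together with its antipode. -/
structure IsAntipodalTower (c : ℕ → OrderedChain V) : Prop where
  boundary_zero : boundary (c 0) = .single [] 1
  boundary_succ (k : ℕ) : boundary (c (k + 1)) = c k + antipode (c k)

theorem IsAntipodalTower.cupCoboundary_eq_one {c : ℕ → OrderedChain V} (hc : IsAntipodalTower c)
    (hs : ∀ k, ∀ v ∈ K, s k (-v) = s k v + 1) (k : ℕ)
    (hcK : ∀ j < k, c j ∈ chainsOn {l | ∀ x ∈ l, x ∈ K}) : cupCoboundary s k (c k) = 1 := by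
  induction k with
  | zero => rw [cupCoboundary_zero_apply, hc.boundary_zero, Finsupp.single_eq_same]
  | succ k ih =>
    rw [cupCoboundary_succ_apply, hc.boundary_succ,
      vertexCup_add_antipode hs k (hcK k k.lt_succ_self),
      ih fun j hj => hcK j (hj.trans k.lt_succ_self)]

/-- A form of Tucker's lemma. -/
theorem IsAntipodalTower.exists_simplex_separated {c : ℕ → OrderedChain V}
    (hc : IsAntipodalTower c) (hs : ∀ k, ∀ v ∈ K, s k (-v) = s k v + 1) (n : ℕ)
    (hcK : ∀ j < n, c j ∈ chainsOn {l | ∀ x ∈ l, x ∈ K}) :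
    ∃ l ∈ (c n).support, ∀ j < n, ∃ u ∈ l, ∃ w ∈ l, s j u ≠ s j w := by
  have h_one := hc.cupCoboundary_eq_one hs n hcK
  have h_exists : ∃ l ∈ (c n).support, cupCoboundary s n (.single l 1) ≠ 0 := by
    by_contra! h_zero
    rw [map_eq_of_mem_chainsOn (g := 0) h_zero ((Finsupp.mem_supported _ _).2 subset_rfl)] at h_one
    exact zero_ne_one h_one
  obtain ⟨l, hl, hl_ne⟩ := h_exists
  exact ⟨l, hl, exists_ne_of_cupCoboundary_ne_zero hl_ne⟩

end Cochains

section Subdivision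

open Filter Topology

/-- The simplices with `k` vertices, all in `K` and at mutual distance at most `δ`. -/
def fineSimplices {X : Type*} [PseudoMetricSpace X] (K : Set X) (δ : ℝ) (k : ℕ) :
    Set (List X) :=
  {l | l.length = k ∧ (∀ x ∈ l, x ∈ K) ∧ ∀ x ∈ l, ∀ y ∈ l, dist x y ≤ δ}

theorem cons_mem_fineSimplices {X : Type*} [PseudoMetricSpace X] {K : Set X} {δ : ℝ} (hδ : 0 ≤ δ)
    {k : ℕ} {b : X} (hb : b ∈ K) {l : List X}
    (hl : l ∈ fineSimplices (K ∩ Metric.closedBall b δ) δ k) :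
    b :: l ∈ fineSimplices K δ (k + 1) := by
  obtain ⟨h_len, h_mem, h_dist⟩ := hl
  refine ⟨by simp [h_len], ?_, ?_⟩
  · simpa [hb] using fun x hx => (h_mem x hx).1
  · have h_ball (x) (hx : x ∈ l) : dist x b ≤ δ := (h_mem x hx).2
    refine List.forall_mem_cons.2 ⟨List.forall_mem_cons.2 ⟨by simpa, fun x hx => ?_⟩,
      fun x hx => List.forall_mem_cons.2 ⟨h_ball x hx, h_dist x hx⟩⟩
    exact (dist_comm b x).trans_le (h_ball x hx)

variable {E : Type*} [NormedAddCommGroup E] [NormedSpace ℝ E]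

/-- The barycenter of the simplex with vertices `l`, a repeated vertex being counted as often as it
occurs; `barycenter [] = 0` is a junk value. -/
noncomputable def barycenter (l : List E) : E := (l.length : ℝ)⁻¹ • l.sum

theorem barycenter_map_neg (l : List E) : barycenter (l.map Neg.neg) = -barycenter l := by
  rw [barycenter, List.length_map, barycenter, ← smul_neg, List.sum_neg]

theorem barycenter_eq_sum (l : List E) :
    barycenter l = ∑ i : Fin l.length, (l.length : ℝ)⁻¹ • l[i] := by
  simp [barycenter, ← Finset.smul_sum]

theorem barycenter_mem {K : Set E} (hK : Convex ℝ K) {l : List E} (hl : l ≠ [])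
    (hlK : ∀ x ∈ l, x ∈ K) : barycenter l ∈ K := by
  rw [barycenter_eq_sum]
  refine hK.sum_mem (fun _ _ => by positivity) ?_ fun i _ => hlK _ (List.getElem_mem _)
  simp [hl]

theorem dist_barycenter_le {l : List E} {v : E} (hv : v ∈ l) {δ : ℝ} (h : ∀ x ∈ l, dist v x ≤ δ)
    {N : ℕ} (hN : l.length ≤ N + 1) : dist v (barycenter l) ≤ N / (N + 1) * δ := by
  have hδ : 0 ≤ δ := (dist_self v).ge.trans (h v hv)
  obtain ⟨⟨j, hj⟩, rfl⟩ := List.get_of_mem hv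
  have h_pos : (0 : ℝ) < l.length := by exact_mod_cast hj.pos
  have h_sub : l[j] - barycenter l = (l.length : ℝ)⁻¹ • ∑ i : Fin l.length, (l[j] - l[i]) := by
    simp [barycenter, smul_sub, ← Nat.cast_smul_eq_nsmul ℝ, smul_smul, h_pos.ne']
  have h_sum : ‖∑ i : Fin l.length, (l[j] - l[i])‖ ≤ (l.length - 1) * δ := by
    rw [← Finset.sum_erase (a := ⟨j, hj⟩) _ (by simp)]
    refine (norm_sum_le_of_le _ fun i _ => (dist_eq_norm _ _).ge.trans
      (h _ (List.getElem_mem _))).trans_eq ?_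
    simp [Finset.card_erase_of_mem, Nat.cast_pred hj.pos]
  have h_len : (l.length : ℝ) ≤ N + 1 := by exact_mod_cast hN
  calc dist l[j] (barycenter l) ≤ (l.length : ℝ)⁻¹ * ((l.length - 1) * δ) := by
        rw [dist_eq_norm, h_sub, norm_smul, norm_inv, Real.norm_of_nonneg h_pos.le]
        gcongr
    _ = (1 - (l.length : ℝ)⁻¹) * δ := by field_simp
    _ ≤ (1 - ((N : ℝ) + 1)⁻¹) * δ := by gcongr
    _ = N / (N + 1) * δ := by field_simp; ring

/-- Barycentric subdivision of chains of lists of length `k`. -/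
noncomputable def subdivide : ℕ → OrderedChain E →ₗ[ZMod 2] OrderedChain E
  | 0 => LinearMap.id
  | k + 1 => Finsupp.linearCombination (ZMod 2) fun l =>
      cone (barycenter l) (subdivide k (boundary (.single l 1)))

theorem subdivide_succ_simplex (k : ℕ) (l : List E) :
    subdivide (k + 1) (.single l 1) =
      cone (barycenter l) (subdivide k (boundary (.single l 1))) := by
  simp [subdivide]

theorem antipode_subdivide (k : ℕ) (c : OrderedChain E) :
    antipode (subdivide k c) = subdivide k (antipode c) := by
  induction k generalizing c with
  | zero => rfl
  | succ k ih =>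
    refine map_eq_of_forall_simplex (V := E) (f := antipode ∘ₗ subdivide (k + 1))
      (g := subdivide (k + 1) ∘ₗ antipode) (fun l => ?_) c
    simp only [LinearMap.comp_apply, antipode_simplex, subdivide_succ_simplex, antipode_cone, ih,
      antipode_boundary, barycenter_map_neg]

theorem boundary_subdivide_succ (k : ℕ) (c : OrderedChain E) :
    boundary (subdivide (k + 1) c) = subdivide k (boundary c) := by
  refine map_eq_of_forall_simplex (V := E) (f := boundary ∘ₗ subdivide (k + 1))
    (g := subdivide k ∘ₗ boundary) (fun l => ?_) c
  have h_cycle : boundary (subdivide k (boundary (.single l 1))) = 0 := by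
    cases k with
    | zero => exact boundary_boundary _
    | succ k => rw [boundary_subdivide_succ k, boundary_boundary, map_zero]
  simp only [LinearMap.comp_apply, subdivide_succ_simplex, boundary_cone, h_cycle, map_zero,
    add_zero]

theorem IsAntipodalTower.subdivide {c : ℕ → OrderedChain E} (hc : IsAntipodalTower c) :
    IsAntipodalTower fun k => subdivide (k + 1) (c k) where
  boundary_zero := by rw [boundary_subdivide_succ, hc.boundary_zero]; rfl
  boundary_succ k := by
    rw [boundary_subdivide_succ, hc.boundary_succ, map_add, antipode_subdivide]

theorem subdivide_simplex_mem_chainsOn {N k : ℕ} (hk : k ≤ N + 1) {K : Set E} (hK : Convex ℝ K)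
    {δ : ℝ} (hδ : 0 ≤ δ) {l : List E} (hl : l ∈ fineSimplices K δ k) :
    subdivide k (.single l 1) ∈ chainsOn (fineSimplices K (N / (N + 1) * δ) k) := by
  induction k generalizing K l with
  | zero =>
    obtain rfl : l = [] := List.length_eq_zero_iff.1 hl.1
    exact simplex_mem_chainsOn ⟨rfl, by simp, by simp⟩
  | succ k ih =>
    obtain ⟨h_len, h_mem, h_dist⟩ := hl
    have hl_ne : l ≠ [] := List.ne_nil_of_length_eq_add_one h_len
    set ball := Metric.closedBall (barycenter l) (N / (N + 1) * δ)
    have h_mem_ball (x) (hx : x ∈ l) : x ∈ K ∩ ball :=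
      ⟨h_mem x hx, dist_barycenter_le hx (h_dist x hx) (h_len.trans_le hk)⟩
    have h_faces : subdivide k (boundary (.single l 1)) ∈
        chainsOn (fineSimplices (K ∩ ball) (N / (N + 1) * δ) k) := by
      refine map_mem_of_mem_chainsOn (fun l' hl' => ?_) (boundary_simplex_mem l)
      exact ih (by lia) (hK.inter (convex_closedBall _ _)) ⟨by grind,
        fun x hx => h_mem_ball x (hl'.2 hx), fun x hx y hy => h_dist x (hl'.2 hx) y (hl'.2 hy)⟩
    rw [subdivide_succ_simplex]
    refine map_mem_of_mem_chainsOn (fun m hm => ?_) h_faces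
    rw [cone_simplex]
    exact simplex_mem_chainsOn
      (cons_mem_fineSimplices (by positivity) (barycenter_mem hK hl_ne h_mem) hm)

/-- The fine simplices that span a part of the unit sphere; the sphere must therefore have flat
faces. -/
def sphericalSimplices (E : Type*) [NormedAddCommGroup E] [NormedSpace ℝ E] (δ : ℝ) (k : ℕ) :
    Set (List E) :=
  {l | ∃ K ⊆ Metric.sphere (0 : E) 1, Convex ℝ K ∧ l ∈ fineSimplices K δ k}

theorem subdivide_mem_chainsOn_sphericalSimplices {N k : ℕ} (hk : k ≤ N + 1) {δ : ℝ} (hδ : 0 ≤ δ)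
    {c : OrderedChain E} (hc : c ∈ chainsOn (sphericalSimplices E δ k)) :
    subdivide k c ∈ chainsOn (sphericalSimplices E (N / (N + 1) * δ) k) := by
  refine map_mem_of_mem_chainsOn ?_ hc
  rintro l ⟨K, hK_sphere, hK, hl⟩
  have h_sub : fineSimplices K (N / (N + 1) * δ) k ⊆ sphericalSimplices E (N / (N + 1) * δ) k :=
    fun m hm => ⟨K, hK_sphere, hK, hm⟩
  exact Finsupp.supported_mono h_sub (subdivide_simplex_mem_chainsOn hk hK hδ hl)

theorem sphericalSimplices_mono {δ η : ℝ} (h : δ ≤ η) (k : ℕ) :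
    sphericalSimplices E δ k ⊆ sphericalSimplices E η k := by
  rintro l ⟨K, hK_sphere, hK, h_len, h_mem, h_dist⟩
  exact ⟨K, hK_sphere, hK, h_len, h_mem, fun x hx y hy => (h_dist x hx y hy).trans h⟩

theorem IsAntipodalTower.exists_fine {c : ℕ → OrderedChain E} (hc : IsAntipodalTower c) {N : ℕ}
    {R : ℝ} (hR : 0 ≤ R) (hcR : ∀ k ≤ N, c k ∈ chainsOn (sphericalSimplices E R (k + 1)))
    {δ : ℝ} (hδ : 0 < δ) :
    ∃ d, IsAntipodalTower d ∧ ∀ k ≤ N, d k ∈ chainsOn (sphericalSimplices E δ (k + 1)) := by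
  set q : ℝ := N / (N + 1)
  have hq_nonneg : 0 ≤ q := by positivity
  have hq_lt : q < 1 := (div_lt_one (by positivity)).2 (lt_add_one _)
  have iterated (r : ℕ) : ∃ d, IsAntipodalTower d ∧
      ∀ k ≤ N, d k ∈ chainsOn (sphericalSimplices E (q ^ r * R) (k + 1)) := by
    induction r with
    | zero => exact ⟨c, hc, by simpa using hcR⟩
    | succ r ih =>
      obtain ⟨d, hd, hdR⟩ := ih
      refine ⟨_, hd.subdivide, fun k hk => ?_⟩
      rw [pow_succ', mul_assoc]
      exact subdivide_mem_chainsOn_sphericalSimplices (by lia) (by positivity) (hdR k hk)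
  have h_tendsto : Tendsto (fun r => q ^ r * R) atTop (𝓝 0) := by
    simpa using (tendsto_pow_atTop_nhds_zero_of_lt_one hq_nonneg hq_lt).mul_const R
  obtain ⟨r, hr⟩ := (h_tendsto.eventually_le_const hδ).exists
  obtain ⟨d, hd, hdR⟩ := iterated r
  exact ⟨d, hd, fun k hk => Finsupp.supported_mono (sphericalSimplices_mono hr _) (hdR k hk)⟩

end Subdivision

section CrossPolytope

/-- The standard antipodal tower of the cross-polytope with vertices `± e i`. -/
noncomputable def crossPolytopeTower {V : Type*} [Neg V] (e : ℕ → V) : ℕ → OrderedChain V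
  | 0 => .single [e 0] 1
  | k + 1 => cone (e (k + 1)) (crossPolytopeTower e k + antipode (crossPolytopeTower e k))

theorem boundary_cone_add_antipode {V : Type*} [Neg V] {c : OrderedChain V}
    (hc : antipode (boundary c) = boundary c) (v : V) :
    boundary (cone v (c + antipode c)) = c + antipode c := by
  rw [boundary_cone, map_add, ← antipode_boundary, hc, chain_add_self, map_zero, add_zero]

theorem isAntipodalTower_crossPolytopeTower {V : Type*} [InvolutiveNeg V] (e : ℕ → V) :
    IsAntipodalTower (crossPolytopeTower e) := by
  have h_zero : boundary (crossPolytopeTower e 0) = .single [] 1 := by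
    simp [crossPolytopeTower, boundary_cons]
  refine ⟨h_zero, fun k => boundary_cone_add_antipode ?_ _⟩
  induction k with
  | zero => simp [h_zero]
  | succ k ih =>
    rw [crossPolytopeTower, boundary_cone_add_antipode ih, map_add, antipode_antipode, add_comm]

/-- The simplices with `k` vertices in a facet of the cross-polytope with vertices `± e i`, `i < k`;
the facet is selected by the signs `ε`. -/
def facetSimplices {V : Type*} [AddGroup V] (e : ℕ → V) (k : ℕ) : Set (List V) :=
  {l | l.length = k ∧ ∃ ε : ℕ → ℤˣ, ∀ x ∈ l, ∃ i < k, x = (ε i : ℤ) • e i}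

theorem map_neg_mem_facetSimplices {V : Type*} [AddGroup V] {e : ℕ → V} {k : ℕ} {l : List V}
    (hl : l ∈ facetSimplices e k) : l.map Neg.neg ∈ facetSimplices e k := by
  obtain ⟨h_len, ε, hε⟩ := hl
  refine ⟨by simp [h_len], -ε, ?_⟩
  simp only [List.forall_mem_map]
  intro x hx
  obtain ⟨i, hi, rfl⟩ := hε x hx
  exact ⟨i, hi, by simp⟩

theorem cons_mem_facetSimplices {V : Type*} [AddGroup V] {e : ℕ → V} {k : ℕ} {l : List V}
    (hl : l ∈ facetSimplices e k) : e k :: l ∈ facetSimplices e (k + 1) := by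
  obtain ⟨h_len, ε, hε⟩ := hl
  refine ⟨by simp [h_len], Function.update ε k 1, List.forall_mem_cons.2 ⟨⟨k, by simp⟩, ?_⟩⟩
  intro x hx
  obtain ⟨i, hi, rfl⟩ := hε x hx
  exact ⟨i, by lia, by rw [Function.update_of_ne hi.ne]⟩

theorem crossPolytopeTower_mem_chainsOn {V : Type*} [AddGroup V] (e : ℕ → V) (k : ℕ) :
    crossPolytopeTower e k ∈ chainsOn (facetSimplices e (k + 1)) := by
  induction k with
  | zero => exact simplex_mem_chainsOn ⟨rfl, 1, by simp⟩
  | succ k ih =>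
    have h_antipode : antipode (crossPolytopeTower e k) ∈ chainsOn (facetSimplices e (k + 1)) := by
      refine map_mem_of_mem_chainsOn (fun l hl => ?_) ih
      rw [antipode_simplex]
      exact simplex_mem_chainsOn (map_neg_mem_facetSimplices hl)
    refine map_mem_of_mem_chainsOn (fun l hl => ?_) (add_mem ih h_antipode)
    rw [cone_simplex]
    exact simplex_mem_chainsOn (cons_mem_facetSimplices hl)

end CrossPolytope

section BorsukUlam

theorem facetSimplices_subset_sphericalSimplices {n k : ℕ} (hk : k ≤ n + 1) :
    facetSimplices (fun i => PiLp.single 1 (Fin.ofNat (n + 1) i) (1 : ℝ)) k ⊆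
      sphericalSimplices (PiLp 1 fun _ : Fin (n + 1) => ℝ) 2 k := by
  rintro l ⟨h_len, ε, hε⟩
  let φ : (PiLp 1 fun _ : Fin (n + 1) => ℝ) →ₗ[ℝ] ℝ :=
    ∑ j : Fin (n + 1), ((ε j : ℤ) : ℝ) • (PiLp.projₗ 1 (fun _ => ℝ) j)
  have hφ (x) : φ x = ∑ j : Fin (n + 1), ((ε j : ℤ) : ℝ) * x j := by simp [φ]
  have hφ_le (x) : φ x ≤ ‖x‖ := by
    rw [hφ, PiLp.norm_eq_of_L1]
    refine Finset.sum_le_sum fun j _ => (le_abs_self _).trans_eq ?_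
    rcases Int.units_eq_one_or (ε j) with h | h <;> simp [h]
  have h_mem (x) (hx : x ∈ l) : x ∈ Metric.closedBall 0 1 ∩ φ ⁻¹' {1} := by
    obtain ⟨i, hi, rfl⟩ := hε x hx
    have h_mod : i % (n + 1) = i := Nat.mod_eq_of_lt (hi.trans_le hk)
    rcases Int.units_eq_one_or (ε i) with h | h <;> simp [h, h_mod, hφ]
  refine ⟨Metric.closedBall 0 1 ∩ φ ⁻¹' {1}, ?_,
    (convex_closedBall 0 1).inter ((convex_singleton 1).linear_preimage φ), h_len, h_mem, ?_⟩
  · rintro x ⟨hx_ball, hx : φ x = 1⟩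
    exact mem_sphere_zero_iff_norm.2
      ((mem_closedBall_zero_iff.1 hx_ball).antisymm (hx.ge.trans (hφ_le x)))
  · intro x hx y hy
    calc dist x y ≤ dist x 0 + dist y 0 := dist_triangle_right x y 0
      _ ≤ 1 + 1 := add_le_add (h_mem x hx).1 (h_mem y hy).1
      _ = 2 := one_add_one_eq_two

theorem exists_fine_antipodalTower (n : ℕ) {δ : ℝ} (hδ : 0 < δ) :
    ∃ c, IsAntipodalTower c ∧ ∀ k ≤ n,
      c k ∈ chainsOn (sphericalSimplices (PiLp 1 fun _ : Fin (n + 1) => ℝ) δ (k + 1)) :=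
  (isAntipodalTower_crossPolytopeTower _).exists_fine zero_le_two (fun k hk =>
    Finsupp.supported_mono (facetSimplices_subset_sphericalSimplices (Nat.succ_le_succ hk))
      (crossPolytopeTower_mem_chainsOn _ k)) hδ

/-- Ties `g v = 0` are broken by a group order, so that the sign of `g v` becomes an odd function
with values in `ZMod 2` wherever `g` is odd. -/
theorem exists_sign_cochain {V A : Type*} [AddGroup V] [AddCommGroup A] [LinearOrder A]
    [IsOrderedAddMonoid A] {L : V →+ A} (hL : Function.Injective L) (g : V → ℝ) :
    ∃ s : V → ZMod 2, (∀ v, v ≠ 0 → g (-v) = -g v → s (-v) = s v + 1) ∧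
      ∀ u w, s u ≠ s w → 0 ≤ g u ∧ g w ≤ 0 ∨ 0 ≤ g w ∧ g u ≤ 0 := by
  classical
  let order (v : V) : ℝ ×ₗ A := toLex (g v, L v)
  refine ⟨fun v => if 0 < order v then 1 else 0, fun v hv hg => ?_, fun u w huw => ?_⟩
  · have h_ne : order v ≠ 0 := fun h =>
      hv ((map_eq_zero_iff L hL).1 (congrArg (fun p => (ofLex p).2) h))
    have h_neg : order (-v) = -order v := by simp only [order, hg, map_neg]; rfl
    simp only [h_neg]
    grind
  · have nonneg_of_pos (v) (hv : 0 < order v) : 0 ≤ g v :=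
      (Prod.Lex.lt_iff.1 hv).elim le_of_lt fun h => h.1.le
    have nonpos_of_not_pos (v) (hv : ¬0 < order v) : g v ≤ 0 :=
      not_lt.1 fun h => hv (Prod.Lex.lt_iff.2 (.inl h))
    grind

theorem exists_fine_list_sign_change {n : ℕ} {f : (PiLp 1 fun _ : Fin (n + 1) => ℝ) → Fin n → ℝ}
    (hf_odd : ∀ x ∈ Metric.sphere 0 1, f (-x) = -f x) {δ : ℝ} (hδ : 0 < δ) :
    ∃ l ≠ [], (∀ x ∈ l, x ∈ Metric.sphere 0 1) ∧ (∀ x ∈ l, ∀ y ∈ l, dist x y ≤ δ) ∧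
      ∀ j, ∃ u ∈ l, ∃ w ∈ l, 0 ≤ f u j ∧ f w j ≤ 0 := by
  obtain ⟨c, hc, hcδ⟩ := exists_fine_antipodalTower n hδ
  let coord (j : ℕ) (x : PiLp 1 fun _ : Fin (n + 1) => ℝ) : ℝ :=
    if h : j < n then f x ⟨j, h⟩ else 0
  let L : (PiLp 1 fun _ : Fin (n + 1) => ℝ) →+ Lex (Fin (n + 1) → ℝ) :=
    { toFun x := toLex (WithLp.ofLp x), map_zero' := rfl, map_add' _ _ := rfl }
  choose s hs_odd hs_ne using fun j =>
    exists_sign_cochain (L := L) (WithLp.ofLp_injective 1) (coord j)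
  have hs (j : ℕ) (x) (hx : x ∈ Metric.sphere 0 1) : s j (-x) = s j x + 1 := by
    refine hs_odd j x (ne_zero_of_mem_unit_sphere ⟨x, hx⟩) ?_
    by_cases hj : j < n <;> simp [coord, hj, hf_odd x hx]
  have hc_sphere (j) (hj : j < n) : c j ∈ chainsOn {l | ∀ x ∈ l, x ∈ Metric.sphere 0 1} :=
    Finsupp.supported_mono (fun l ⟨_, hK, _, _, hl, _⟩ x hx => hK (hl x hx)) (hcδ j hj.le)
  obtain ⟨l, hl, hl_sep⟩ := hc.exists_simplex_separated hs n hc_sphere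
  obtain ⟨K, hK_sphere, -, hl_len, hlK, hlδ⟩ := (Finsupp.mem_supported _ _).1 (hcδ n le_rfl) hl
  refine ⟨l, List.ne_nil_of_length_eq_add_one hl_len, fun x hx => hK_sphere (hlK x hx), hlδ,
    fun j => ?_⟩
  obtain ⟨u, hu, w, hw, huw⟩ := hl_sep j j.2
  have h_sign := hs_ne j u w huw
  simp only [coord, j.2, dite_true] at h_sign
  rcases h_sign with h | h
  exacts [⟨u, hu, w, hw, h⟩, ⟨w, hw, u, hu, h⟩]

theorem exists_norm_le_of_odd {n : ℕ} {f : (PiLp 1 fun _ : Fin (n + 1) => ℝ) → Fin n → ℝ}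
    (hf : ContinuousOn f (Metric.sphere 0 1)) (hf_odd : ∀ x ∈ Metric.sphere 0 1, f (-x) = -f x)
    {ε : ℝ} (hε : 0 < ε) : ∃ x ∈ Metric.sphere 0 1, ‖f x‖ ≤ ε := by
  obtain ⟨δ, hδ, h_unif⟩ := Metric.uniformContinuousOn_iff_le.1
    ((isCompact_sphere 0 1).uniformContinuousOn_of_continuous hf) ε hε
  obtain ⟨l, hl_ne, hl_sphere, hl_fine, hl_sign⟩ := exists_fine_list_sign_change hf_odd hδ
  obtain ⟨x, hx⟩ := List.exists_mem_of_ne_nil l hl_ne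
  refine ⟨x, hl_sphere x hx, (pi_norm_le_iff_of_nonneg hε.le).2 fun j => ?_⟩
  have h_close (y) (hy : y ∈ l) : |f x j - f y j| ≤ ε :=
    (dist_le_pi_dist (f x) (f y) j).trans
      (h_unif x (hl_sphere x hx) y (hl_sphere y hy) (hl_fine x hx y hy))
  obtain ⟨u, hu, w, hw, hfu, hfw⟩ := hl_sign j
  have hu_close := abs_le.1 (h_close u hu)
  have hw_close := abs_le.1 (h_close w hw)
  exact abs_le.2 ⟨by linarith, by linarith⟩

theorem exists_eq_zero_of_odd_on_sphere {n : ℕ}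
    {f : (PiLp 1 fun _ : Fin (n + 1) => ℝ) → Fin n → ℝ}
    (hf : ContinuousOn f (Metric.sphere 0 1)) (hf_odd : ∀ x ∈ Metric.sphere 0 1, f (-x) = -f x) :
    ∃ x ∈ Metric.sphere 0 1, f x = 0 := by
  have h_nonempty := NormedSpace.sphere_nonempty (E := PiLp 1 fun _ : Fin (n + 1) => ℝ) (x := 0)
    |>.2 zero_le_one
  obtain ⟨x, hx, hx_min⟩ := (isCompact_sphere 0 1).exists_isMinOn h_nonempty hf.norm
  refine ⟨x, hx, by_contra fun h_ne => ?_⟩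
  have h_pos : 0 < ‖f x‖ := norm_pos_iff.2 h_ne
  obtain ⟨y, hy, hy_le⟩ := exists_norm_le_of_odd hf hf_odd (half_pos h_pos)
  exact absurd ((hx_min hy).trans hy_le) (not_le.2 (half_lt_self h_pos))

/-- The Borsuk–Ulam theorem. -/
theorem exists_ne_zero_map_eq_zero_of_odd {E F : Type*} [NormedAddCommGroup E] [NormedSpace ℝ E]
    [NormedAddCommGroup F] [NormedSpace ℝ F] [FiniteDimensional ℝ F]
    (h_dim : Module.finrank ℝ F < Module.finrank ℝ E) {f : E → F} (hf : ContinuousOn f {0}ᶜ)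
    (hf_odd : ∀ x ≠ 0, f (-x) = -f x) : ∃ x ≠ 0, f x = 0 := by
  obtain ⟨b, hb⟩ := exists_linearIndependent_of_le_finrank (R := ℝ) (M := E) h_dim
  let ι : (PiLp 1 fun _ : Fin (Module.finrank ℝ F + 1) => ℝ) →ₗ[ℝ] E :=
    (Fintype.linearCombination ℝ b) ∘ₗ (WithLp.linearEquiv 1 ℝ _).toLinearMap
  have hι : Function.Injective ι :=
    (linearIndependent_iff_injective_fintypeLinearCombination.1 hb).comp
      (WithLp.linearEquiv 1 ℝ _).injective
  have hι_ne (x) (hx : x ∈ Metric.sphere 0 1) : ι x ≠ 0 :=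
    (map_ne_zero_iff ι hι).2 (ne_zero_of_mem_unit_sphere ⟨x, hx⟩)
  let Φ : F ≃L[ℝ] (Fin (Module.finrank ℝ F) → ℝ) := .ofFinrankEq (by simp)
  obtain ⟨x, hx, hfx⟩ := exists_eq_zero_of_odd_on_sphere (f := fun x => Φ (f (ι x)))
    (Φ.continuous.comp_continuousOn
      (hf.comp (LinearMap.continuous_of_finiteDimensional ι).continuousOn hι_ne))
    (fun x hx => by rw [map_neg, hf_odd _ (hι_ne x hx), map_neg])
  exact ⟨ι x, hι_ne x hx, Φ.map_eq_zero_iff.1 hfx⟩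

end BorsukUlam

section Mobius

open Filter Topology ComplexConjugate

/-- The disc automorphism `w ↦ (g + w) / (1 + conj g * w)`; for `‖g‖ = 1` it degenerates to the
constant `g`, except for the junk value `0` at `w = -g`. -/
noncomputable def mobius (g w : ℂ) : ℂ := (g + w) / (1 + conj g * w)

theorem mobius_zero_right (g : ℂ) : mobius g 0 = g := by simp [mobius]

theorem mobius_neg_neg (g w : ℂ) : mobius (-g) (-w) = -mobius g w := by
  rw [mobius, mobius, map_neg, neg_mul_neg, ← neg_add, neg_div]

theorem one_add_conj_mul_ne_zero {g w : ℂ} (hw : ‖w‖ = 1) (hwg : w ≠ -g) :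
    1 + conj g * w ≠ 0 := by
  intro h
  have h_conj : conj w * w = 1 := by simp [Complex.conj_mul', hw]
  have h_eq : conj (w + g) * w = 0 := by rw [map_add, add_mul, h_conj, h]
  have hw_ne : w ≠ 0 := norm_ne_zero_iff.1 (hw ▸ one_ne_zero)
  exact hwg (eq_neg_of_add_eq_zero_left
    ((map_eq_zero conj).1 ((mul_eq_zero_iff_right hw_ne).1 h_eq)))

theorem mobius_eq_of_norm_eq_one {g w : ℂ} (hg : ‖g‖ = 1) (hw : ‖w‖ = 1) (hwg : w ≠ -g) :
    mobius g w = g := by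
  have h_conj : g * conj g = 1 := by simp [Complex.mul_conj', hg]
  rw [mobius, div_eq_iff (one_add_conj_mul_ne_zero hw hwg)]
  linear_combination -w * h_conj

theorem tendsto_mobius {ι : Type*} {l : Filter ι} {g w : ι → ℂ} {g₀ w₀ : ℂ}
    (hg : Tendsto g l (𝓝 g₀)) (hw : Tendsto w l (𝓝 w₀)) (hw₀ : ‖w₀‖ = 1) (hwg : w₀ ≠ -g₀) :
    Tendsto (fun i => mobius (g i) (w i)) l (𝓝 (mobius g₀ w₀)) :=
  (hg.add hw).div (tendsto_const_nhds.add (((Complex.continuous_conj.tendsto g₀).comp hg).mul hw))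
    (one_add_conj_mul_ne_zero hw₀ hwg)

/-- The action of `mobius g`, `‖g‖ < 1`, on phases: a lift of it along `s ↦ exp (s * I)`. -/
noncomputable def mobiusPhase (g : ℂ) (s : ℝ) : ℝ :=
  s - 2 * (Complex.log (1 + conj g * Complex.exp (s * Complex.I))).im

theorem mobiusPhase_add_two_pi_mul (g : ℂ) (s : ℝ) (k : ℕ) :
    mobiusPhase g (s + 2 * Real.pi * k) = mobiusPhase g s + 2 * Real.pi * k := by
  have h_exp : Complex.exp ((s + 2 * Real.pi * k : ℝ) * Complex.I) =
      Complex.exp (s * Complex.I) :=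
    Complex.exp_eq_exp_iff_exists_int.2 ⟨k, by push_cast; ring⟩
  rw [mobiusPhase, h_exp, mobiusPhase]
  ring

variable {g : ℂ}

theorem norm_conj_mul_exp_lt_one (hg : ‖g‖ < 1) (s : ℝ) :
    ‖conj g * Complex.exp (s * Complex.I)‖ < 1 := by
  simpa [Complex.norm_exp_ofReal_mul_I] using hg

theorem contDiff_mobiusPhase (hg : ‖g‖ < 1) : ContDiff ℝ (⊤ : ℕ∞) (mobiusPhase g) := by
  have h_arg : ContDiff ℝ (⊤ : ℕ∞) fun s : ℝ => 1 + conj g * Complex.exp (s * Complex.I) := by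
    have h_coe : ContDiff ℝ (⊤ : ℕ∞) fun s : ℝ => (s : ℂ) := Complex.ofRealCLM.contDiff
    fun_prop
  have h_log : ContDiff ℝ (⊤ : ℕ∞)
      fun s : ℝ => Complex.log (1 + conj g * Complex.exp (s * Complex.I)) := by
    refine contDiff_iff_contDiffAt.2 fun s => ?_
    have h_slit := Complex.mem_slitPlane_of_norm_lt_one (norm_conj_mul_exp_lt_one hg s)
    exact ((Complex.contDiffAt_log h_slit).restrict_scalars ℝ).comp s h_arg.contDiffAt
  exact contDiff_id.sub (contDiff_const.mul (Complex.imCLM.contDiff.comp h_log))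

theorem re_one_sub_div_one_add_nonneg {a : ℂ} (ha : ‖a‖ ≤ 1) : 0 ≤ ((1 - a) / (1 + a)).re := by
  have h_sq : a.re * a.re + a.im * a.im ≤ 1 := by
    rw [← Complex.normSq_apply, Complex.normSq_eq_norm_sq]
    exact pow_le_one₀ (norm_nonneg a) ha
  rw [Complex.div_re, ← add_div]
  refine div_nonneg ?_ (Complex.normSq_nonneg _)
  simp only [Complex.sub_re, Complex.add_re, Complex.sub_im, Complex.add_im, Complex.one_re,
    Complex.one_im]
  linarith

theorem hasDerivAt_mobiusPhase (hg : ‖g‖ < 1) (s : ℝ) :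
    HasDerivAt (mobiusPhase g) ((1 - conj g * Complex.exp (s * Complex.I)) /
      (1 + conj g * Complex.exp (s * Complex.I))).re s := by
  set a := conj g * Complex.exp (s * Complex.I) with ha
  have h_slit : 1 + a ∈ Complex.slitPlane :=
    Complex.mem_slitPlane_of_norm_lt_one (norm_conj_mul_exp_lt_one hg s)
  have h_exp : HasDerivAt (fun t : ℝ => 1 + conj g * Complex.exp (t * Complex.I))
      (a * Complex.I) s := by
    have := ((((hasDerivAt_id s).ofReal_comp.mul_const Complex.I).cexp).const_mul
      (conj g)).const_add 1
    simpa [ha, mul_assoc] using this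
  have h_im := Complex.imCLM.hasFDerivAt.comp_hasDerivAt s (h_exp.clog_real h_slit)
  refine ((hasDerivAt_id s).sub (h_im.const_mul 2)).congr_deriv ?_
  have h_split : (1 - a) / (1 + a) = 1 - 2 * (a / (1 + a)) := by
    have := Complex.slitPlane_ne_zero h_slit
    field_simp
    ring
  rw [h_split, mul_div_right_comm]
  simp [← ha]

theorem monotone_mobiusPhase (hg : ‖g‖ < 1) : Monotone (mobiusPhase g) :=
  monotone_of_deriv_nonneg (fun s => (hasDerivAt_mobiusPhase hg s).differentiableAt) fun s => by
    rw [(hasDerivAt_mobiusPhase hg s).deriv]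
    exact re_one_sub_div_one_add_nonneg (norm_conj_mul_exp_lt_one hg s).le

theorem exp_mobiusPhase_mul_I (hg : ‖g‖ < 1) (s : ℝ) :
    Complex.exp (mobiusPhase g s * Complex.I) = mobius g (Complex.exp (s * Complex.I)) := by
  set w := Complex.exp (s * Complex.I) with hw
  set q := 1 + conj g * w with hq
  have hq_ne : q ≠ 0 := Complex.slitPlane_ne_zero
    (Complex.mem_slitPlane_of_norm_lt_one (norm_conj_mul_exp_lt_one hg s))
  have hq_norm : (‖q‖ : ℂ) ≠ 0 := by simpa using hq_ne
  have h_phase : Complex.exp ((Complex.log q).im * Complex.I) = q / ‖q‖ := by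
    rw [Complex.log_im, eq_div_iff hq_norm, mul_comm, Complex.norm_mul_exp_arg_mul_I]
  have h_num : w * conj q = g + w := by
    have hw_conj : w * conj w = 1 := by
      simp [Complex.mul_conj', hw, Complex.norm_exp_ofReal_mul_I]
    simp only [hq, map_add, map_mul, map_one, Complex.conj_conj]
    linear_combination g * hw_conj
  calc Complex.exp (mobiusPhase g s * Complex.I)
      = w / (q / ‖q‖) ^ 2 := by
        rw [← h_phase, ← Complex.exp_nat_mul, hw, ← Complex.exp_sub, mobiusPhase]
        congr 1
        push_cast
        ring
    _ = w * (‖q‖ : ℂ) ^ 2 / q ^ 2 := by field_simp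
    _ = w * conj q / q := by rw [← Complex.mul_conj']; field_simp
    _ = mobius g w := by rw [h_num, mobius]

end Mobius

section MonotonePhase

open FourierTransform

/-- `h` is a smooth curve in the unit circle that turns in the positive direction, `k` times in all
over the interval `[0, 1]`. -/
def HasMonotonePhase (k : ℕ) (h : ℝ → ℂ) : Prop :=
  ∃ φ : ℝ → ℝ, ContDiff ℝ (⊤ : ℕ∞) φ ∧ Monotone φ ∧ φ 1 = φ 0 + 2 * Real.pi * k ∧
    ∀ y, h y = Complex.exp (φ y * Complex.I)

theorem fourierChar_mul_exp (φ : ℝ → ℝ) (y : ℝ) :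
    (𝐞 y : ℂ) * Complex.exp (φ y * Complex.I) =
      Complex.exp ((2 * Real.pi * y + φ y : ℝ) * Complex.I) := by
  rw [Real.fourierChar_apply, ← Complex.exp_add, ← add_mul, Complex.ofReal_add]

theorem strictMono_two_pi_mul_add {φ : ℝ → ℝ} (hφ : Monotone φ) :
    StrictMono fun y => 2 * Real.pi * y + φ y :=
  (strictMono_mul_left_of_pos Real.two_pi_pos).add_monotone hφ

theorem hasMonotonePhase_const {c : ℂ} (hc : ‖c‖ = 1) : HasMonotonePhase 0 fun _ => c := by
  refine ⟨fun _ => c.arg, contDiff_const, monotone_const, by simp, fun _ => ?_⟩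
  simpa [hc] using (Complex.norm_mul_exp_arg_mul_I c).symm

namespace HasMonotonePhase

variable {k : ℕ} {h : ℝ → ℂ}

theorem mobius {g : ℂ} (hg : ‖g‖ < 1) (hh : HasMonotonePhase k h) :
    HasMonotonePhase k fun y => mobius g (h y) := by
  obtain ⟨φ, hφ, hφ_mono, hφ_turns, hφ_exp⟩ := hh
  refine ⟨mobiusPhase g ∘ φ, (contDiff_mobiusPhase hg).comp hφ, (monotone_mobiusPhase hg).comp
    hφ_mono, ?_, fun y => ?_⟩
  · simp only [Function.comp_apply, hφ_turns, mobiusPhase_add_two_pi_mul]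
  · simp only [Function.comp_apply, exp_mobiusPhase_mul_I hg, hφ_exp]

theorem fourierChar_mul (hh : HasMonotonePhase k h) :
    HasMonotonePhase (k + 1) fun y => 𝐞 y * h y := by
  obtain ⟨φ, hφ, hφ_mono, hφ_turns, hφ_exp⟩ := hh
  refine ⟨fun y => 2 * Real.pi * y + φ y, (contDiff_const.mul contDiff_id).add hφ,
    (strictMono_two_pi_mul_add hφ_mono).monotone, ?_, fun y => ?_⟩
  · push_cast
    linarith
  · simp only [hφ_exp, fourierChar_mul_exp]

theorem ae_fourierChar_mul_ne (hh : HasMonotonePhase k h) (c : ℂ) : ∀ᵐ y, 𝐞 y * h y ≠ c := by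
  obtain ⟨φ, -, hφ_mono, -, hφ_exp⟩ := hh
  have h_inj : Function.Injective fun y => ((2 * Real.pi * y + φ y : ℝ) : ℂ) * Complex.I :=
    (mul_left_injective₀ Complex.I_ne_zero).comp
      (Complex.ofReal_injective.comp (strictMono_two_pi_mul_add hφ_mono).injective)
  have h_countable : {y : ℝ | 𝐞 y * h y = c}.Countable := by
    simp only [hφ_exp, fourierChar_mul_exp]
    exact (Complex.countable_preimage_exp.2 (Set.countable_singleton c)).preimage_of_injOn
      h_inj.injOn
  exact h_countable.ae_notMem volume

theorem norm_eq_one (hh : HasMonotonePhase k h) (y : ℝ) : ‖h y‖ = 1 := by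
  obtain ⟨φ, -, -, -, hφ_exp⟩ := hh
  rw [hφ_exp, Complex.norm_exp_ofReal_mul_I]

theorem contDiff (hh : HasMonotonePhase k h) : ContDiff ℝ (⊤ : ℕ∞) h := by
  obtain ⟨φ, hφ, -, -, hφ_exp⟩ := hh
  rw [funext hφ_exp]
  exact ((Complex.ofRealCLM.contDiff.comp hφ).mul contDiff_const).cexp

theorem smoothCircleValued (hh : HasMonotonePhase k h) : SmoothCircleValued h :=
  ⟨hh.contDiff.contDiffOn, fun y _ => hh.norm_eq_one y⟩

theorem integral_norm_derivWithin (hh : HasMonotonePhase k h) :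
    ∫ x in (0 : ℝ)..1, ‖derivWithin h (Set.Icc 0 1) x‖ = 2 * Real.pi * k := by
  obtain ⟨φ, hφ, hφ_mono, hφ_turns, hφ_exp⟩ := hh
  have hφ_diff : Differentiable ℝ φ := hφ.differentiable (by simp)
  have h_speed : Set.EqOn (fun x => ‖derivWithin h (Set.Icc 0 1) x‖) (deriv φ)
      (Set.uIcc 0 1) := by
    intro x hx
    rw [Set.uIcc_of_le zero_le_one] at hx
    have h_deriv := ((hφ_diff x).hasDerivAt.ofReal_comp.mul_const Complex.I).cexp
    rw [← funext hφ_exp] at h_deriv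
    beta_reduce
    rw [h_deriv.hasDerivWithinAt.derivWithin (uniqueDiffOn_Icc zero_lt_one x hx), norm_mul,
      Complex.norm_exp_ofReal_mul_I, norm_mul, Complex.norm_I, Complex.norm_real, one_mul, mul_one,
      Real.norm_of_nonneg hφ_mono.deriv_nonneg]
  calc ∫ x in (0 : ℝ)..1, ‖derivWithin h (Set.Icc 0 1) x‖
      = ∫ x in (0 : ℝ)..1, deriv φ x := intervalIntegral.integral_congr h_speed
    _ = φ 1 - φ 0 := intervalIntegral.integral_deriv_eq_sub (fun x _ => hφ_diff x)
        ((hφ.continuous_deriv (by simp)).intervalIntegrable _ _)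
    _ = 2 * Real.pi * k := by rw [hφ_turns, add_sub_cancel_left]

end HasMonotonePhase

end MonotonePhase

section Blaschke

open Filter Topology FourierTransform

/-- The first Schur parameter of the curve `blaschke v`. It lies in the closed unit disc, and on the
unit circle just when `Fin.tail v = 0`, unless `v = 0`, where it has the junk value `0`. -/
noncomputable def schurParam {m : ℕ} (v : Fin (m + 1) → ℂ) : ℂ :=
  v 0 / (‖v 0‖ + ‖Fin.tail v‖ : ℝ)

/-- The values at `exp (2 * π * I * y)` of a finite Blaschke product of degree less than `m`, built
from its Schur parameters by the Schur algorithm. The algorithm stops at the first unimodular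
parameter `g`; this is encoded by the junk value `blaschke 0 = 0`, since `mobius g 0 = g`. -/
noncomputable def blaschke : {m : ℕ} → (Fin m → ℂ) → ℝ → ℂ
  | 0, _, _ => 0
  | _ + 1, v, y => mobius (schurParam v) (𝐞 y * blaschke (Fin.tail v) y)

variable {m : ℕ}

theorem tail_neg (v : Fin (m + 1) → ℂ) : Fin.tail (-v) = -Fin.tail v := rfl

theorem tail_smul (t : ℝ) (v : Fin (m + 1) → ℂ) : Fin.tail (t • v) = t • Fin.tail v := rfl

theorem schurParam_neg (v : Fin (m + 1) → ℂ) : schurParam (-v) = -schurParam v := by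
  simp [schurParam, tail_neg, neg_div]

theorem schurParam_smul {t : ℝ} (ht : 0 < t) (v : Fin (m + 1) → ℂ) :
    schurParam (t • v) = schurParam v := by
  have ht_ne : (t : ℂ) ≠ 0 := by exact_mod_cast ht.ne'
  rw [schurParam, tail_smul, Pi.smul_apply, norm_smul, norm_smul, Real.norm_of_nonneg ht.le,
    ← mul_add, Complex.real_smul, Complex.ofReal_mul, mul_div_mul_left _ _ ht_ne, schurParam]

theorem norm_schurParam_lt_one {v : Fin (m + 1) → ℂ} (hv : Fin.tail v ≠ 0) :
    ‖schurParam v‖ < 1 := by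
  have h_pos : 0 < ‖Fin.tail v‖ := norm_pos_iff.2 hv
  rw [schurParam, norm_div, Complex.norm_real, Real.norm_of_nonneg (by positivity),
    div_lt_one (by positivity)]
  exact lt_add_of_pos_right _ h_pos

theorem apply_zero_ne_zero_of_tail_eq_zero {v : Fin (m + 1) → ℂ} (hv : v ≠ 0)
    (h_tail : Fin.tail v = 0) : v 0 ≠ 0 :=
  fun h_zero => hv (funext (Fin.cases h_zero (congrFun h_tail)))

theorem norm_schurParam_eq_one {v : Fin (m + 1) → ℂ} (hv : v ≠ 0) (h_tail : Fin.tail v = 0) :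
    ‖schurParam v‖ = 1 := by
  simp [schurParam, h_tail, apply_zero_ne_zero_of_tail_eq_zero hv h_tail]

theorem continuousAt_schurParam {v : Fin (m + 1) → ℂ} (hv : v ≠ 0) :
    ContinuousAt schurParam v := by
  have h_ne : ‖v 0‖ + ‖Fin.tail v‖ ≠ 0 := by
    rcases eq_or_ne (Fin.tail v) 0 with h_tail | h_tail
    · have := norm_pos_iff.2 (apply_zero_ne_zero_of_tail_eq_zero hv h_tail)
      positivity
    · have := norm_pos_iff.2 h_tail
      positivity
  have h_zero : ContinuousAt (fun u : Fin (m + 1) → ℂ => u 0) v := continuousAt_apply 0 v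
  have h_tail : ContinuousAt (fun u : Fin (m + 1) → ℂ => Fin.tail u) v := continuousAt_id.finTail
  exact h_zero.div (Complex.continuous_ofReal.continuousAt.comp (h_zero.norm.add h_tail.norm))
    (by exact_mod_cast h_ne)

theorem blaschke_neg (v : Fin m → ℂ) (y : ℝ) : blaschke (-v) y = -blaschke v y := by
  induction m with
  | zero => simp [blaschke]
  | succ m ih => rw [blaschke, schurParam_neg, tail_neg, ih, mul_neg, mobius_neg_neg, blaschke]

theorem blaschke_zero (y : ℝ) : blaschke (0 : Fin m → ℂ) y = 0 :=
  self_eq_neg.1 (by simpa using blaschke_neg (0 : Fin m → ℂ) y)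

theorem blaschke_smul {t : ℝ} (ht : 0 < t) (v : Fin m → ℂ) : blaschke (t • v) = blaschke v := by
  funext y
  induction m with
  | zero => rfl
  | succ m ih => rw [blaschke, schurParam_smul ht, tail_smul, ih, blaschke]

theorem blaschke_of_tail_eq_zero {v : Fin (m + 1) → ℂ} (h_tail : Fin.tail v = 0) (y : ℝ) :
    blaschke v y = schurParam v := by
  rw [blaschke, h_tail, blaschke_zero, mul_zero, mobius_zero_right]

theorem exists_hasMonotonePhase_blaschke {v : Fin m → ℂ} (hv : v ≠ 0) :
    ∃ k < m, HasMonotonePhase k (blaschke v) := by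
  induction m with
  | zero => exact absurd (Subsingleton.elim v 0) hv
  | succ m ih =>
    rcases eq_or_ne (Fin.tail v) 0 with h_tail | h_tail
    · refine ⟨0, m.succ_pos, ?_⟩
      rw [funext (blaschke_of_tail_eq_zero h_tail)]
      exact hasMonotonePhase_const (norm_schurParam_eq_one hv h_tail)
    · obtain ⟨k, hk, hh⟩ := ih h_tail
      exact ⟨k + 1, Nat.succ_lt_succ hk, hh.fourierChar_mul.mobius (norm_schurParam_lt_one h_tail)⟩

theorem norm_blaschke {v : Fin m → ℂ} (hv : v ≠ 0) (y : ℝ) : ‖blaschke v y‖ = 1 := by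
  obtain ⟨k, -, hh⟩ := exists_hasMonotonePhase_blaschke hv
  exact hh.norm_eq_one y

theorem smoothCircleValued_blaschke {v : Fin m → ℂ} (hv : v ≠ 0) :
    SmoothCircleValued (blaschke v) := by
  obtain ⟨k, -, hh⟩ := exists_hasMonotonePhase_blaschke hv
  exact hh.smoothCircleValued

theorem ae_fourierChar_mul_blaschke_ne {v : Fin m → ℂ} (hv : v ≠ 0) (c : ℂ) :
    ∀ᵐ y, 𝐞 y * blaschke v y ≠ c := by
  obtain ⟨k, -, hh⟩ := exists_hasMonotonePhase_blaschke hv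
  exact hh.ae_fourierChar_mul_ne c

theorem norm_fourierChar_mul_blaschke {v : Fin m → ℂ} (hv : v ≠ 0) (y : ℝ) :
    ‖𝐞 y * blaschke v y‖ = 1 := by
  rw [norm_mul, Circle.norm_coe, norm_blaschke hv, one_mul]

theorem ae_tendsto_blaschke_of_tail {u : ℕ → Fin (m + 1) → ℂ} {v : Fin (m + 1) → ℂ} (hv : v ≠ 0)
    (hu : Tendsto u atTop (𝓝 v)) {w : Fin m → ℂ} (hw : w ≠ 0)
    (h_tail : ∀ᵐ y, Tendsto (fun k => blaschke (Fin.tail (u k)) y) atTop (𝓝 (blaschke w y))) :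
    ∀ᵐ y, Tendsto (fun k => blaschke (u k) y) atTop
      (𝓝 (mobius (schurParam v) (𝐞 y * blaschke w y))) := by
  filter_upwards [h_tail, ae_fourierChar_mul_blaschke_ne hw (-schurParam v)] with y hy hy_ne
  exact tendsto_mobius ((continuousAt_schurParam hv).tendsto.comp hu) (hy.const_mul _)
    (norm_fourierChar_mul_blaschke hw y) hy_ne

theorem ae_mobius_schurParam_eq_blaschke {v : Fin (m + 1) → ℂ} (hv : v ≠ 0)
    (h_tail : Fin.tail v = 0) {w : Fin m → ℂ} (hw : w ≠ 0) :
    ∀ᵐ y, mobius (schurParam v) (𝐞 y * blaschke w y) = blaschke v y := by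
  filter_upwards [ae_fourierChar_mul_blaschke_ne hw (-schurParam v)] with y hy_ne
  rw [blaschke_of_tail_eq_zero h_tail, mobius_eq_of_norm_eq_one (norm_schurParam_eq_one hv h_tail)
    (norm_fourierChar_mul_blaschke hw y) hy_ne]

theorem exists_subseq_tendsto_normalized {E : Type*} [NormedAddCommGroup E] [NormedSpace ℝ E]
    [ProperSpace E] {x : ℕ → E} (hx : ∀ᶠ k in atTop, x k ≠ 0) :
    ∃ w ≠ 0, ∃ σ : ℕ → ℕ, StrictMono σ ∧
      Tendsto (fun k => ‖x (σ k)‖⁻¹ • x (σ k)) atTop (𝓝 w) := by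
  have h_sphere : ∃ᶠ k in atTop, ‖x k‖⁻¹ • x k ∈ Metric.sphere (0 : E) 1 :=
    (hx.mono fun k hk => by simp [norm_smul, hk]).frequently
  obtain ⟨w, hw, σ, hσ, h_lim⟩ := (isCompact_sphere (0 : E) 1).tendsto_subseq' h_sphere
  exact ⟨w, ne_zero_of_mem_unit_sphere ⟨w, hw⟩, σ, hσ, h_lim⟩

/-- If the tails of `u k` vanish in the limit, then `blaschke` need not converge on them, but it
depends only on their directions, which converge along a subsequence. -/
theorem exists_subseq_ae_tendsto_blaschke {u : ℕ → Fin m → ℂ} {v : Fin m → ℂ} (hv : v ≠ 0)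
    (hu : Tendsto u atTop (𝓝 v)) : ∃ σ : ℕ → ℕ, StrictMono σ ∧
      ∀ᵐ y, Tendsto (fun k => blaschke (u (σ k)) y) atTop (𝓝 (blaschke v y)) := by
  induction m with
  | zero => exact absurd (Subsingleton.elim v 0) hv
  | succ m ih =>
    have hu_tail : Tendsto (fun k => Fin.tail (u k)) atTop (𝓝 (Fin.tail v)) := hu.finTail
    by_cases h_tail : Fin.tail v = 0
    · by_cases h_freq : ∃ᶠ k in atTop, Fin.tail (u k) = 0
      · obtain ⟨σ, hσ, h_zero⟩ := extraction_of_frequently_atTop h_freq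
        refine ⟨σ, hσ, .of_forall fun y => ?_⟩
        simp only [blaschke_of_tail_eq_zero h_tail, blaschke_of_tail_eq_zero (h_zero _)]
        exact (continuousAt_schurParam hv).tendsto.comp (hu.comp hσ.tendsto_atTop)
      · have h_ev : ∀ᶠ k in atTop, Fin.tail (u k) ≠ 0 := not_frequently.1 h_freq
        obtain ⟨w, hw, σ, hσ, h_dir⟩ := exists_subseq_tendsto_normalized h_ev
        obtain ⟨τ, hτ, h_ae⟩ := ih hw h_dir
        have hστ := (hσ.comp hτ).tendsto_atTop
        refine ⟨σ ∘ τ, hσ.comp hτ, ?_⟩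
        have h_tails : ∀ᵐ y, Tendsto (fun k => blaschke (Fin.tail (u ((σ ∘ τ) k))) y) atTop
            (𝓝 (blaschke w y)) := by
          filter_upwards [h_ae] with y hy
          refine hy.congr' ((hστ.eventually h_ev).mono fun k hk => ?_)
          exact congrFun (blaschke_smul (inv_pos.2 (norm_pos_iff.2 hk)) _) y
        filter_upwards [ae_tendsto_blaschke_of_tail hv (hu.comp hστ) hw h_tails,
          ae_mobius_schurParam_eq_blaschke hv h_tail hw] with y hy hy_eq
        rwa [hy_eq] at hy
    · obtain ⟨σ, hσ, h_ae⟩ := ih h_tail hu_tail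
      exact ⟨σ, hσ, ae_tendsto_blaschke_of_tail hv (hu.comp hσ.tendsto_atTop) h_tail h_ae⟩

theorem tendsto_integral_norm_blaschke_sub_of_ae {u : ℕ → Fin m → ℂ} {v : Fin m → ℂ} (hv : v ≠ 0)
    (hu : Tendsto u atTop (𝓝 v))
    (h_ae : ∀ᵐ y, Tendsto (fun k => blaschke (u k) y) atTop (𝓝 (blaschke v y))) :
    Tendsto (fun k => ∫ x in (0 : ℝ)..1, ‖blaschke (u k) x - blaschke v x‖) atTop (𝓝 0) := by
  have h_cont {w : Fin m → ℂ} (hw : w ≠ 0) : Continuous (blaschke w) := by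
    obtain ⟨k, -, hh⟩ := exists_hasMonotonePhase_blaschke hw
    exact hh.contDiff.continuous
  have hu_ne : ∀ᶠ k in atTop, u k ≠ 0 := hu.eventually_ne hv
  suffices Tendsto (fun k => ∫ x in (0 : ℝ)..1, ‖blaschke (u k) x - blaschke v x‖) atTop
      (𝓝 (∫ _ in (0 : ℝ)..1, (0 : ℝ))) by rwa [intervalIntegral.integral_zero] at this
  refine intervalIntegral.tendsto_integral_filter_of_dominated_convergence (fun _ => 2) ?_ ?_
    intervalIntegrable_const ?_
  · exact hu_ne.mono fun k hk => ((h_cont hk).sub (h_cont hv)).norm.aestronglyMeasurable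
  · refine hu_ne.mono fun k hk => .of_forall fun x _ => ?_
    calc ‖‖blaschke (u k) x - blaschke v x‖‖ ≤ ‖blaschke (u k) x‖ + ‖blaschke v x‖ := by
          rw [norm_norm]
          exact norm_sub_le _ _
      _ = 2 := by rw [norm_blaschke hk, norm_blaschke hv, one_add_one_eq_two]
  · filter_upwards [h_ae] with x hx _
    simpa using (hx.sub_const (blaschke v x)).norm

theorem tendsto_integral_norm_blaschke_sub {v : Fin m → ℂ} (hv : v ≠ 0) :
    Tendsto (fun u => ∫ x in (0 : ℝ)..1, ‖blaschke u x - blaschke v x‖) (𝓝 v) (𝓝 0) := by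
  refine tendsto_of_seq_tendsto fun u hu => tendsto_of_subseq_tendsto fun τ hτ => ?_
  obtain ⟨σ, hσ, h_ae⟩ := exists_subseq_ae_tendsto_blaschke hv (hu.comp hτ)
  exact ⟨σ, tendsto_integral_norm_blaschke_sub_of_ae hv
    ((hu.comp hτ).comp hσ.tendsto_atTop) h_ae⟩

theorem continuousOn_comp_blaschke {F : Type*} [SeminormedAddCommGroup F]
    {ψ : (ℝ → ℂ) → F}
    (hψ : ∀ h : ℝ → ℂ, SmoothCircleValued h → ∀ ε > 0, ∃ δ > 0, ∀ h' : ℝ → ℂ,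
      SmoothCircleValued h' → (∫ x in (0 : ℝ)..1, ‖h' x - h x‖) < δ → ‖ψ h' - ψ h‖ < ε) :
    ContinuousOn (fun v : Fin m → ℂ => ψ (blaschke v)) {0}ᶜ := by
  intro v hv
  refine (Metric.tendsto_nhds.2 fun ε hε => ?_).mono_left nhdsWithin_le_nhds
  obtain ⟨δ, hδ, h_close⟩ := hψ (blaschke v) (smoothCircleValued_blaschke hv) ε hε
  filter_upwards [(tendsto_integral_norm_blaschke_sub hv).eventually_lt_const hδ,
    eventually_ne_nhds hv] with u hu_close hu
  simpa only [dist_eq_norm] using h_close (blaschke u) (smoothCircleValued_blaschke hu) hu_close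

end Blaschke

/-- **Nonlinear Lazarev–Lieb theorem.** If `ψ : C^∞([0,1]; S¹) → ℝⁿ` is continuous with
respect to the `L¹`-norm and odd (`ψ(-h) = -ψ(h)`), then `ψ` has a zero `h` with
`‖h‖_{W^{1,1}} ≤ 1 + π n`. -/
theorem nonlinear_lazarev_lieb (n : ℕ) (ψ : (ℝ → ℂ) → EuclideanSpace ℝ (Fin n))
    (hcont : ∀ h : ℝ → ℂ, SmoothCircleValued h → ∀ ε > 0, ∃ δ > 0,
      ∀ h' : ℝ → ℂ, SmoothCircleValued h' →
        (∫ x in (0:ℝ)..1, ‖h' x - h x‖) < δ → ‖ψ h' - ψ h‖ < ε)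
    (hodd : ∀ h : ℝ → ℂ, SmoothCircleValued h → ψ (fun x => -h x) = -ψ h) :
    ∃ h : ℝ → ℂ, SmoothCircleValued h ∧ ψ h = 0 ∧
      (∫ x in (0:ℝ)..1, ‖h x‖) + (∫ x in (0:ℝ)..1, ‖derivWithin h (Set.Icc 0 1) x‖)
        ≤ 1 + Real.pi * n := by
  have h_dim : Module.finrank ℝ (EuclideanSpace ℝ (Fin n)) <
      Module.finrank ℝ (Fin (n / 2 + 1) → ℂ) := by
    simp only [finrank_euclideanSpace, Fintype.card_fin, Module.finrank_pi_fintype,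
      Complex.finrank_real_complex, Finset.sum_const, Finset.card_univ, smul_eq_mul]
    lia
  have h_odd (v : Fin (n / 2 + 1) → ℂ) (hv : v ≠ 0) : ψ (blaschke (-v)) = -ψ (blaschke v) := by
    rw [funext (blaschke_neg v), hodd _ (smoothCircleValued_blaschke hv)]
  obtain ⟨v, hv, h_zero⟩ :=
    exists_ne_zero_map_eq_zero_of_odd h_dim (continuousOn_comp_blaschke hcont) h_odd
  obtain ⟨k, hk, h_phase⟩ := exists_hasMonotonePhase_blaschke hv
  have hk_le : (2 * k : ℝ) ≤ n := by exact_mod_cast (by lia : 2 * k ≤ n)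
  refine ⟨blaschke v, h_phase.smoothCircleValued, h_zero, ?_⟩
  calc (∫ x in (0:ℝ)..1, ‖blaschke v x‖) +
        ∫ x in (0:ℝ)..1, ‖derivWithin (blaschke v) (Set.Icc 0 1) x‖
      = 1 + Real.pi * (2 * k) := by
        simp only [h_phase.norm_eq_one, h_phase.integral_norm_derivWithin,
          intervalIntegral.integral_const, sub_zero, one_smul]
        ring
    _ ≤ 1 + Real.pi * n := by gcongr
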